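/- The ℂ-linear span of the ten functions θ¹²[δ₁], …, θ¹²[δ₁₀] has dimension exactly 10, and the ℂ-linear span of the twenty functions {θ¹²[δᵢ] : i=1,…,10} ∪ {Ξ₆[δⱼ] : j=1,…,10} has dimension exactly 15. -/

import Mathlib

open scoped BigOperators

namespace TwoLoop

/-- 2×2 complex matrices. -/
abbrev Mat2 := Matrix (Fin 2) (Fin 2) ℂ

/-- The genus-2 Siegel upper half space: symmetric 2×2 complex matrices with
positive definite imaginary part. -/
def SiegelH2 : Set Mat2 := {τ | τ.transpose = τ ∧ (τ.map Complex.im).PosDef}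

/-- A (half-integer) theta characteristic `[a;b]`, recorded by its rows `a, b ∈ {0,1}²`. -/
abbrev Char := (Fin 2 → ℤ) × (Fin 2 → ℤ)

/-- The theta constant `θ[a;b](τ) = Σ_{n ∈ ℤ²} exp(πi (n+a/2)ᵀ τ (n+a/2) + πi (n+a/2)·b)`. -/
noncomputable def theta (κ : Char) (τ : Mat2) : ℂ :=
  ∑' n : Fin 2 → ℤ,
    Complex.exp ((Real.pi : ℂ) * Complex.I *
      ((∑ i, ∑ j, ((n i : ℂ) + (κ.1 i : ℂ) / 2) * τ i j * ((n j : ℂ) + (κ.1 j : ℂ) / 2))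
        + ∑ i, ((n i : ℂ) + (κ.1 i : ℂ) / 2) * (κ.2 i : ℂ)))

/-- The ten even characteristics δ₁,…,δ₁₀. -/
def δev : Fin 10 → Char :=
  ![(![0,0], ![0,0]), (![0,0], ![0,1]), (![0,0], ![1,0]), (![0,0], ![1,1]),
    (![0,1], ![0,0]), (![0,1], ![1,0]), (![1,0], ![0,0]), (![1,0], ![0,1]),
    (![1,1], ![0,0]), (![1,1], ![1,1])]

/-- The six odd characteristics ν₁,…,ν₆. -/
def νodd : Fin 6 → Char :=
  ![(![0,1], ![0,1]), (![1,0], ![1,0]), (![0,1], ![1,1]),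
    (![1,0], ![1,1]), (![1,1], ![0,1]), (![1,1], ![1,0])]

/-- `Θ[ε](τ) = θ[ε;0](2τ)`. -/
noncomputable def Θf (ε : Fin 2 → ℤ) (τ : Mat2) : ℂ := theta (ε, ![0,0]) ((2 : ℂ) • τ)

noncomputable def P0 (τ : Mat2) : ℂ :=
  Θf ![0,0] τ ^ 4 + Θf ![0,1] τ ^ 4 + Θf ![1,0] τ ^ 4 + Θf ![1,1] τ ^ 4
noncomputable def P1 (τ : Mat2) : ℂ :=
  2 * (Θf ![0,0] τ ^ 2 * Θf ![0,1] τ ^ 2 + Θf ![1,0] τ ^ 2 * Θf ![1,1] τ ^ 2)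
noncomputable def P2 (τ : Mat2) : ℂ :=
  2 * (Θf ![0,0] τ ^ 2 * Θf ![1,0] τ ^ 2 + Θf ![0,1] τ ^ 2 * Θf ![1,1] τ ^ 2)
noncomputable def P3 (τ : Mat2) : ℂ :=
  2 * (Θf ![0,0] τ ^ 2 * Θf ![1,1] τ ^ 2 + Θf ![0,1] τ ^ 2 * Θf ![1,0] τ ^ 2)
noncomputable def P4 (τ : Mat2) : ℂ :=
  4 * (Θf ![0,0] τ * Θf ![0,1] τ * Θf ![1,0] τ * Θf ![1,1] τ)

/-- The vector `(P₀,…,P₄)`. -/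
noncomputable def Pv : Fin 5 → Mat2 → ℂ := ![P0, P1, P2, P3, P4]

open MvPolynomial in
/-- The Igusa quartic as a polynomial in `x₀,…,x₄`. -/
noncomputable def I4poly : MvPolynomial (Fin 5) ℂ :=
  X 4 ^ 4 + X 4 ^ 2 * X 0 ^ 2 - X 4 ^ 2 * X 1 ^ 2 - X 4 ^ 2 * X 2 ^ 2 - X 4 ^ 2 * X 3 ^ 2
    + X 1 ^ 2 * X 2 ^ 2 + X 1 ^ 2 * X 3 ^ 2 + X 2 ^ 2 * X 3 ^ 2
    - 2 * (X 0 * X 1 * X 2 * X 3)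

/-- The signature `⟨κ|λ⟩ = exp(πi(a_κ·b_λ − b_κ·a_λ))`. -/
noncomputable def sig (κ lam : Char) : ℂ :=
  Complex.exp ((Real.pi : ℂ) * Complex.I *
    (((∑ i, κ.1 i * lam.2 i : ℤ) : ℂ) - ((∑ i, κ.2 i * lam.1 i : ℤ) : ℂ)))

/-- Componentwise mod-2 sum of characteristics. -/
def addChar (κ lam : Char) : Char :=
  (fun i => (κ.1 i + lam.1 i) % 2, fun i => (κ.2 i + lam.2 i) % 2)

/-- For each even characteristic `δ_d`, the ordering `(k₁,…,k₆)` of `{1,…,6}` (0-indexed) whose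
first three entries form the triad of odd characteristics with `δ_d = ν_{k₁}+ν_{k₂}+ν_{k₃}`
and whose last three are the complementary indices. -/
def triad : Fin 10 → Fin 6 → Fin 6 :=
  ![![0,3,5,1,2,4], ![0,1,5,2,3,4], ![0,1,4,2,3,5], ![0,3,4,1,2,5], ![0,1,3,2,4,5],
    ![0,4,5,1,2,3], ![0,1,2,3,4,5], ![0,2,3,1,4,5], ![0,2,5,1,3,4], ![0,2,4,1,3,5]]

/-- D'Hoker–Phong's `Ξ₆[δ]`. -/
noncomputable def Xi6 (d : Fin 10) (τ : Mat2) : ℂ :=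
  ∑ i : Fin 3, ∑ j : Fin 3,
    if i < j then
      sig (νodd (triad d (Fin.castLE (by norm_num) i))) (νodd (triad d (Fin.castLE (by norm_num) j))) *
        ∏ m : Fin 3,
          theta (addChar (addChar (νodd (triad d (Fin.castLE (by norm_num) i)))
              (νodd (triad d (Fin.castLE (by norm_num) j))))
            (νodd (triad d (⟨m.1 + 3, by omega⟩ : Fin 6)))) τ ^ 4
    else 0

/-- The formal derivative `∂I₄/∂θ⁴[δ]` of the Igusa quartic with respect to the ten fourth
powers of the even theta constants, regarded as independent variables. -/
noncomputable def Dd (d : Fin 10) (τ : Mat2) : ℂ :=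
  (1 / 48 : ℂ) *
    (theta (δev d) τ ^ 4 * (∑ d' : Fin 10, theta (δev d') τ ^ 8) - 4 * theta (δev d) τ ^ 12)

/-- `f_δ = 2Ξ₆[δ] − ∂I₄/∂θ⁴[δ]`. -/
noncomputable def fδ (d : Fin 10) (τ : Mat2) : ℂ := 2 * Xi6 d τ - Dd d τ

/-- `Ψ₆`, the weight-6 modular form. -/
noncomputable def Ψ6 (τ : Mat2) : ℂ :=
  P0 τ ^ 3 - 9 * P0 τ * (P1 τ ^ 2 + P2 τ ^ 2 + P3 τ ^ 2 - 4 * P4 τ ^ 2)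
    + 54 * (P1 τ * P2 τ * P3 τ)

/-- `Ψ₁₀`, the weight-10 modular form. -/
noncomputable def Ψ10 (τ : Mat2) : ℂ := ∏ d : Fin 10, theta (δev d) τ ^ 2

/-- A characteristic is even when `a·b` is even. -/
def IsEvenChar (κ : Char) : Prop := (∑ i, κ.1 i * κ.2 i) % 2 = 0

/-- A characteristic is odd when `a·b` is odd. -/
def IsOddChar (κ : Char) : Prop := (∑ i, κ.1 i * κ.2 i) % 2 = 1


/-- The general term of the theta series. -/
noncomputable def thTerm (κ : Char) (τ : Mat2) (n : Fin 2 → ℤ) : ℂ :=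
  Complex.exp ((Real.pi : ℂ) * Complex.I *
      ((∑ i, ∑ j, ((n i : ℂ) + (κ.1 i : ℂ) / 2) * τ i j * ((n j : ℂ) + (κ.1 j : ℂ) / 2))
        + ∑ i, ((n i : ℂ) + (κ.1 i : ℂ) / 2) * (κ.2 i : ℂ)))

lemma theta_eq (κ : Char) (τ : Mat2) : theta κ τ = ∑' n, thTerm κ τ n := rfl

lemma siegel_two {τ : Mat2} (h : τ ∈ SiegelH2) : (2 : ℂ) • τ ∈ SiegelH2 := by
  obtain ⟨h1, h2⟩ := h
  refine ⟨by rw [Matrix.transpose_smul, h1], ?_⟩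
  have : ((2 : ℂ) • τ).map Complex.im = (2 : ℝ) • τ.map Complex.im := by
    ext i j
    simp
  rw [this]
  exact h2.smul (by norm_num)

lemma siegel_bound {τ : Mat2} (h : τ ∈ SiegelH2) :
    ∃ c : ℝ, 0 < c ∧ ∀ x y : ℝ, c * (x ^ 2 + y ^ 2) ≤
      x * (τ 0 0).im * x + x * (τ 0 1).im * y + (y * (τ 1 0).im * x + y * (τ 1 1).im * y) := by
  obtain ⟨h1, h2⟩ := h
  have hs : (τ 1 0).im = (τ 0 1).im := by
    have := congrFun (congrFun h1 0) 1
    rw [Matrix.transpose_apply] at this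
    rw [this]
  have hd := h2.det_pos
  have hp : 0 < (τ 0 0).im := by simpa using h2.diag_pos (i := 0)
  have hq : 0 < (τ 1 1).im := by simpa using h2.diag_pos (i := 1)
  rw [Matrix.det_fin_two] at hd
  simp only [Matrix.map_apply] at hd
  rw [hs] at hd ⊢
  set p := (τ 0 0).im
  set r := (τ 0 1).im
  set s := (τ 1 1).im
  refine ⟨(p * s - r * r) / (p + s), by positivity, fun x y => ?_⟩
  rw [div_mul_eq_mul_div, div_le_iff₀ (by positivity)]
  nlinarith [sq_nonneg (p * x + r * y), sq_nonneg (r * x + s * y)]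

lemma summable_one_dim (c : ℝ) (hc : 0 < c) (d : ℝ) :
    Summable (fun n : ℤ => Real.exp (-Real.pi * c * ((n : ℝ) + d) ^ 2)) := by
  have := (summable_jacobiTheta₂_term_iff (c * d * Complex.I) (c * Complex.I)).2 (by simpa using hc)
  have h2 := (this.norm).mul_right (Real.exp (-Real.pi * c * d ^ 2))
  refine h2.congr fun n => ?_
  rw [norm_jacobiTheta₂_term, ← Real.exp_add]
  congr 1
  simp
  ring

lemma summable_two_dim (c : ℝ) (hc : 0 < c) (d : Fin 2 → ℝ) :
    Summable (fun n : Fin 2 → ℤ =>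
      Real.exp (-Real.pi * (c * (((n 0 : ℝ) + d 0) ^ 2 + ((n 1 : ℝ) + d 1) ^ 2)))) := by
  have h := (summable_one_dim c hc (d 0)).mul_of_nonneg (summable_one_dim c hc (d 1))
    (fun _ => (Real.exp_pos _).le) (fun _ => (Real.exp_pos _).le)
  have h2 := (Equiv.summable_iff (finTwoArrowEquiv ℤ)).2 h
  refine h2.congr fun n => ?_
  change Real.exp (-Real.pi * c * ((n 0 : ℝ) + d 0) ^ 2) *
    Real.exp (-Real.pi * c * ((n 1 : ℝ) + d 1) ^ 2) = _
  rw [← Real.exp_add]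
  congr 1
  ring

lemma norm_thTerm (κ : Char) (τ : Mat2) (n : Fin 2 → ℤ) : ‖thTerm κ τ n‖ =
    Real.exp (-Real.pi *
     (((n 0 : ℝ) + (κ.1 0 : ℝ) / 2) * (τ 0 0).im * ((n 0 : ℝ) + (κ.1 0 : ℝ) / 2)
     + ((n 0 : ℝ) + (κ.1 0 : ℝ) / 2) * (τ 0 1).im * ((n 1 : ℝ) + (κ.1 1 : ℝ) / 2)
     + (((n 1 : ℝ) + (κ.1 1 : ℝ) / 2) * (τ 1 0).im * ((n 0 : ℝ) + (κ.1 0 : ℝ) / 2)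
     + ((n 1 : ℝ) + (κ.1 1 : ℝ) / 2) * (τ 1 1).im * ((n 1 : ℝ) + (κ.1 1 : ℝ) / 2)))) := by
  have e : ∀ k a : ℤ, (k : ℂ) + (a : ℂ) / 2 = (((k : ℝ) + (a : ℝ) / 2 : ℝ) : ℂ) := by
    intro k a; push_cast; rfl
  have e2 : ∀ a : ℤ, (a : ℂ) = ((a : ℝ) : ℂ) := by intro a; push_cast; rfl
  rw [thTerm, Complex.norm_exp]
  congr 1
  simp only [e, Fin.sum_univ_two]
  rw [e2 (κ.2 0), e2 (κ.2 1)]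
  simp only [Complex.mul_re, Complex.mul_im, Complex.add_re, Complex.add_im, Complex.ofReal_re,
    Complex.ofReal_im, Complex.I_re, Complex.I_im]
  ring

lemma summable_norm_thTerm (κ : Char) {τ : Mat2} (h : τ ∈ SiegelH2) :
    Summable (fun n => ‖thTerm κ τ n‖) := by
  obtain ⟨c, hc, hb⟩ := siegel_bound h
  refine Summable.of_nonneg_of_le (fun _ => norm_nonneg _) (fun n => ?_)
    (summable_two_dim c hc (fun i => (κ.1 i : ℝ) / 2))
  rw [norm_thTerm]
  apply Real.exp_le_exp.2
  have := hb ((n 0 : ℝ) + (κ.1 0 : ℝ) / 2) ((n 1 : ℝ) + (κ.1 1 : ℝ) / 2)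
  nlinarith [Real.pi_pos]

lemma summable_thTerm (κ : Char) {τ : Mat2} (h : τ ∈ SiegelH2) :
    Summable (thTerm κ τ) := (summable_norm_thTerm κ h).of_norm

/-- Shifting `a` by an even vector does not change the theta constant. -/
lemma theta_shift (a b c : Fin 2 → ℤ) (τ : Mat2) :
    theta (fun i => a i + 2 * c i, b) τ = theta (a, b) τ := by
  rw [theta_eq, theta_eq, ← (Equiv.addRight c).tsum_eq (thTerm (a, b) τ)]
  refine tsum_congr fun n => ?_
  unfold thTerm
  congr 1
  simp only [Fin.sum_univ_two, Equiv.coe_addRight, Pi.add_apply]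
  push_cast
  ring

/-- The reindexing map behind the duplication formula. -/
def dupMap (x : (Fin 2 × Fin 2) × ((Fin 2 → ℤ) × (Fin 2 → ℤ))) : (Fin 2 → ℤ) × (Fin 2 → ℤ) :=
  (fun i => x.2.1 i + x.2.2 i + ![(x.1.1 : ℤ), (x.1.2 : ℤ)] i, fun i => x.2.1 i - x.2.2 i)

lemma dupMap_bij : Function.Bijective dupMap := by
  constructor
  · rintro ⟨⟨e1, e2⟩, u, v⟩ ⟨⟨f1, f2⟩, s, t⟩ h
    simp only [dupMap, Prod.mk.injEq] at h
    obtain ⟨h1, h2⟩ := h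
    have a0 := congrFun h1 0
    have a1 := congrFun h1 1
    have b0 := congrFun h2 0
    have b1 := congrFun h2 1
    simp at a0 a1 b0 b1
    have k1 : e1 = f1 := by omega
    have k2 : e2 = f2 := by omega
    subst k1 k2
    have : u = s := by
      funext i; fin_cases i <;> simp <;> omega
    have : v = t := by
      funext i; fin_cases i <;> simp <;> omega
    simp [*]
  · rintro ⟨m, n⟩
    have key : ∀ a b : ℤ, ∃ (e : Fin 2) (u v : ℤ), u + v + e = a ∧ u - v = b := by
      intro a b
      rcases Int.even_or_odd' (a + b) with ⟨k, hk | hk⟩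
      · exact ⟨0, k, k - b, by simp; omega, by omega⟩
      · exact ⟨1, k, k - b, by simp; omega, by omega⟩
    obtain ⟨e0, u0, v0, h0, h0'⟩ := key (m 0) (n 0)
    obtain ⟨e1, u1, v1, h1, h1'⟩ := key (m 1) (n 1)
    refine ⟨((e0, e1), (![u0, u1], ![v0, v1])), ?_⟩
    simp only [dupMap, Prod.mk.injEq]
    constructor
    · funext i; fin_cases i <;> simp [h0, h1]
    · funext i; fin_cases i <;> simp [h0', h1']

/-- The duplication formula. -/
lemma theta_sq (a b : Fin 2 → ℤ) {τ : Mat2} (h : τ ∈ SiegelH2) :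
    theta (a, b) τ ^ 2 = ∑ e : Fin 2 × Fin 2,
      Complex.exp (Real.pi * Complex.I *
        ((((e.1 : ℤ) + a 0) * b 0 + ((e.2 : ℤ) + a 1) * b 1 : ℤ) : ℂ)) *
      (theta (![e.1 + a 0, e.2 + a 1], ![0, 0]) ((2 : ℂ) • τ) *
        theta (![e.1, e.2], ![0, 0]) ((2 : ℂ) • τ)) := by
  have hn := summable_norm_thTerm (a, b) h
  have h2 := siegel_two h
  have hs : Summable (fun z : (Fin 2 → ℤ) × (Fin 2 → ℤ) =>
      thTerm (a, b) τ z.1 * thTerm (a, b) τ z.2) := summable_mul_of_summable_norm hn hn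
  rw [pow_two, theta_eq, tsum_mul_tsum_of_summable_norm hn hn,
    ← (Equiv.ofBijective dupMap dupMap_bij).tsum_eq]
  have hs' := (Equiv.ofBijective dupMap dupMap_bij).summable_iff.2 hs
  rw [Function.comp_def] at hs'
  rw [hs'.tsum_prod, tsum_fintype]
  refine Finset.sum_congr rfl fun e _ => ?_
  rw [theta_eq, theta_eq, tsum_mul_tsum_of_summable_norm (summable_norm_thTerm _ h2)
    (summable_norm_thTerm _ h2), ← tsum_mul_left]
  refine tsum_congr fun z => ?_
  obtain ⟨u, v⟩ := z
  obtain ⟨e0, e1⟩ := e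
  simp only [Equiv.ofBijective_apply, dupMap, thTerm]
  rw [← Complex.exp_add, ← Complex.exp_add, ← Complex.exp_add, Complex.exp_eq_exp_iff_exists_int]
  refine ⟨u 0 * b 0 + u 1 * b 1, ?_⟩
  simp only [Fin.sum_univ_two, Matrix.smul_apply, Matrix.cons_val_zero, Matrix.cons_val_one,
    smul_eq_mul]
  push_cast
  ring

lemma exp_sign (k : ℤ) :
    Complex.exp (Real.pi * Complex.I * (k : ℂ)) = if k % 2 = 0 then 1 else -1 := by
  have h2 : ∀ j : ℤ, Complex.exp (Real.pi * Complex.I * (2 * (j : ℂ))) = 1 := fun j => by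
    rw [Complex.exp_eq_one_iff]
    exact ⟨j, by ring⟩
  rcases Int.even_or_odd' k with ⟨j, rfl | rfl⟩
  · rw [if_pos (by omega)]
    push_cast
    exact h2 j
  · rw [if_neg (by omega)]
    push_cast
    rw [mul_add, Complex.exp_add, h2, mul_one, Complex.exp_pi_mul_I, one_mul]

lemma theta_red (x y : ℤ) (τ : Mat2) :
    theta (![x, y], ![0, 0]) τ = theta (![x % 2, y % 2], ![0, 0]) τ := by
  have := theta_shift ![x % 2, y % 2] ![0, 0] ![x / 2, y / 2] τ
  rw [← this]
  congr 2
  funext i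
  fin_cases i
  · simp; omega
  · simp; omega

lemma theta_sq' (a b c d : ℤ) {τ : Mat2} (h : τ ∈ SiegelH2) :
    theta (![a, b], ![c, d]) τ ^ 2 =
      (if (a * c + b * d) % 2 = 0 then 1 else -1) *
        (Θf ![a % 2, b % 2] τ * Θf ![0, 0] τ) +
      (if (a * c + (1 + b) * d) % 2 = 0 then 1 else -1) *
        (Θf ![a % 2, (1 + b) % 2] τ * Θf ![0, 1] τ) +
      ((if ((1 + a) * c + b * d) % 2 = 0 then 1 else -1) *
        (Θf ![(1 + a) % 2, b % 2] τ * Θf ![1, 0] τ) +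
      (if ((1 + a) * c + (1 + b) * d) % 2 = 0 then 1 else -1) *
        (Θf ![(1 + a) % 2, (1 + b) % 2] τ * Θf ![1, 1] τ)) := by
  rw [theta_sq _ _ h]
  simp only [exp_sign, Fintype.sum_prod_type, Fin.sum_univ_two]
  rw [theta_red (_ + _), theta_red (_ + _), theta_red (_ + _), theta_red (_ + _)]
  simp [Θf]

/-- The fourth powers of the even theta constants as linear forms in `P₀,…,P₄`. -/
def linT (p : Fin 5 → ℂ) : Fin 10 → ℂ :=
  ![p 0 + p 1 + p 2 + p 3, p 0 - p 1 + p 2 - p 3, p 0 + p 1 - p 2 - p 3, p 0 - p 1 - p 2 + p 3,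
    2 * p 1 + 2 * p 4, 2 * p 1 - 2 * p 4, 2 * p 2 + 2 * p 4, 2 * p 2 - 2 * p 4,
    2 * p 3 + 2 * p 4, 2 * p 3 - 2 * p 4]

lemma theta_four (d : Fin 10) {τ : Mat2} (h : τ ∈ SiegelH2) :
    theta (δev d) τ ^ 4 = linT (fun i => Pv i τ) d := by
  have e : theta (δev d) τ ^ 4 = (theta (δev d) τ ^ 2) ^ 2 := by ring
  rw [e]
  fin_cases d <;> simp [δev, theta_sq' _ _ _ _ h, linT, Pv, P0, P1, P2, P3, P4] <;> ring

lemma theta_twelve (d : Fin 10) {τ : Mat2} (h : τ ∈ SiegelH2) :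
    theta (δev d) τ ^ 12 = linT (fun i => Pv i τ) d ^ 3 := by
  rw [← theta_four d h]
  ring

lemma sig_eq (κ lam : Char) : sig κ lam =
    if ((∑ i, κ.1 i * lam.2 i) - (∑ i, κ.2 i * lam.1 i)) % 2 = 0 then 1 else -1 := by
  rw [← exp_sign, sig]
  push_cast
  rfl

lemma Xi6_expand (d : Fin 10) (τ : Mat2) (s1 s2 s3 : ℂ) (i1 i2 i3 j1 j2 j3 k1 k2 k3 : Fin 10)
    (h1 : sig (νodd (triad d 0)) (νodd (triad d 1)) = s1)
    (h2 : sig (νodd (triad d 0)) (νodd (triad d 2)) = s2)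
    (h3 : sig (νodd (triad d 1)) (νodd (triad d 2)) = s3)
    (a1 : addChar (addChar (νodd (triad d 0)) (νodd (triad d 1))) (νodd (triad d 3)) = δev i1)
    (a2 : addChar (addChar (νodd (triad d 0)) (νodd (triad d 1))) (νodd (triad d 4)) = δev i2)
    (a3 : addChar (addChar (νodd (triad d 0)) (νodd (triad d 1))) (νodd (triad d 5)) = δev i3)
    (b1 : addChar (addChar (νodd (triad d 0)) (νodd (triad d 2))) (νodd (triad d 3)) = δev j1)
    (b2 : addChar (addChar (νodd (triad d 0)) (νodd (triad d 2))) (νodd (triad d 4)) = δev j2)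
    (b3 : addChar (addChar (νodd (triad d 0)) (νodd (triad d 2))) (νodd (triad d 5)) = δev j3)
    (c1 : addChar (addChar (νodd (triad d 1)) (νodd (triad d 2))) (νodd (triad d 3)) = δev k1)
    (c2 : addChar (addChar (νodd (triad d 1)) (νodd (triad d 2))) (νodd (triad d 4)) = δev k2)
    (c3 : addChar (addChar (νodd (triad d 1)) (νodd (triad d 2))) (νodd (triad d 5)) = δev k3)
    (hτ : τ ∈ SiegelH2) :
    Xi6 d τ =
      s1 * (linT (fun i => Pv i τ) i1 * linT (fun i => Pv i τ) i2 * linT (fun i => Pv i τ) i3) +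
      s2 * (linT (fun i => Pv i τ) j1 * linT (fun i => Pv i τ) j2 * linT (fun i => Pv i τ) j3) +
      s3 * (linT (fun i => Pv i τ) k1 * linT (fun i => Pv i τ) k2 * linT (fun i => Pv i τ) k3) := by
  have q0 : ∀ h : 3 ≤ 6, Fin.castLE h (0 : Fin 3) = (0 : Fin 6) := fun _ => rfl
  have q1 : ∀ h : 3 ≤ 6, Fin.castLE h (1 : Fin 3) = (1 : Fin 6) := fun _ => rfl
  have q2 : ∀ h : 3 ≤ 6, Fin.castLE h (2 : Fin 3) = (2 : Fin 6) := fun _ => rfl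
  have r0 : ∀ h, (⟨(0 : Fin 3).1 + 3, h⟩ : Fin 6) = 3 := fun _ => rfl
  have r1 : ∀ h, (⟨(1 : Fin 3).1 + 3, h⟩ : Fin 6) = 4 := fun _ => rfl
  have r2 : ∀ h, (⟨(2 : Fin 3).1 + 3, h⟩ : Fin 6) = 5 := fun _ => rfl
  simp only [← theta_four _ hτ]
  rw [← a1, ← a2, ← a3, ← b1, ← b2, ← b3, ← c1, ← c2, ← c3, ← h1, ← h2, ← h3]
  unfold Xi6
  simp only [Fin.sum_univ_three, Fin.prod_univ_three, q0, q1, q2, r0, r1, r2]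
  simp

/-- `Ξ₆[δ]` as a cubic polynomial in the fourth powers. -/
def cubXi (t : Fin 10 → ℂ) : Fin 10 → ℂ :=
  ![(-1) * (t 4 * t 7 * t 3) + (-1) * (t 1 * t 8 * t 5) + (-1) * (t 9 * t 2 * t 6),
    (1) * (t 6 * t 4 * t 2) + (-1) * (t 8 * t 0 * t 5) + (1) * (t 3 * t 9 * t 7),
    (1) * (t 6 * t 4 * t 1) + (1) * (t 9 * t 3 * t 5) + (-1) * (t 0 * t 8 * t 7),
    (-1) * (t 4 * t 7 * t 0) + (1) * (t 2 * t 9 * t 5) + (1) * (t 8 * t 1 * t 6),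
    (1) * (t 6 * t 2 * t 1) + (-1) * (t 7 * t 3 * t 0) + (1) * (t 5 * t 8 * t 9),
    (1) * (t 2 * t 9 * t 3) + (-1) * (t 1 * t 8 * t 0) + (1) * (t 7 * t 4 * t 6),
    (1) * (t 4 * t 2 * t 1) + (1) * (t 7 * t 9 * t 8) + (-1) * (t 5 * t 0 * t 3),
    (1) * (t 6 * t 9 * t 8) + (-1) * (t 4 * t 3 * t 0) + (1) * (t 5 * t 1 * t 2),
    (1) * (t 6 * t 7 * t 9) + (-1) * (t 1 * t 0 * t 5) + (1) * (t 3 * t 2 * t 4),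
    (1) * (t 6 * t 7 * t 8) + (1) * (t 2 * t 3 * t 5) + (-1) * (t 0 * t 1 * t 4)]

lemma Xi6_eq (d : Fin 10) {τ : Mat2} (hτ : τ ∈ SiegelH2) :
    Xi6 d τ = cubXi (linT (fun i => Pv i τ)) d := by
  fin_cases d
  · exact Xi6_expand 0 τ (-1) (-1) (-1) 4 7 3 1 8 5 9 2 6
      ((sig_eq _ _).trans (if_neg (by decide)))
      ((sig_eq _ _).trans (if_neg (by decide)))
      ((sig_eq _ _).trans (if_neg (by decide)))
      (by decide) (by decide) (by decide) (by decide) (by decide) (by decide)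
      (by decide) (by decide) (by decide) hτ
  · exact Xi6_expand 1 τ (1) (-1) (1) 6 4 2 8 0 5 3 9 7
      ((sig_eq _ _).trans (if_pos (by decide)))
      ((sig_eq _ _).trans (if_neg (by decide)))
      ((sig_eq _ _).trans (if_pos (by decide)))
      (by decide) (by decide) (by decide) (by decide) (by decide) (by decide)
      (by decide) (by decide) (by decide) hτ
  · exact Xi6_expand 2 τ (1) (1) (-1) 6 4 1 9 3 5 0 8 7
      ((sig_eq _ _).trans (if_pos (by decide)))
      ((sig_eq _ _).trans (if_pos (by decide)))
      ((sig_eq _ _).trans (if_neg (by decide)))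
      (by decide) (by decide) (by decide) (by decide) (by decide) (by decide)
      (by decide) (by decide) (by decide) hτ
  · exact Xi6_expand 3 τ (-1) (1) (1) 4 7 0 2 9 5 8 1 6
      ((sig_eq _ _).trans (if_neg (by decide)))
      ((sig_eq _ _).trans (if_pos (by decide)))
      ((sig_eq _ _).trans (if_pos (by decide)))
      (by decide) (by decide) (by decide) (by decide) (by decide) (by decide)
      (by decide) (by decide) (by decide) hτ
  · exact Xi6_expand 4 τ (1) (-1) (1) 6 2 1 7 3 0 5 8 9
      ((sig_eq _ _).trans (if_pos (by decide)))
      ((sig_eq _ _).trans (if_neg (by decide)))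
      ((sig_eq _ _).trans (if_pos (by decide)))
      (by decide) (by decide) (by decide) (by decide) (by decide) (by decide)
      (by decide) (by decide) (by decide) hτ
  · exact Xi6_expand 5 τ (1) (-1) (1) 2 9 3 1 8 0 7 4 6
      ((sig_eq _ _).trans (if_pos (by decide)))
      ((sig_eq _ _).trans (if_neg (by decide)))
      ((sig_eq _ _).trans (if_pos (by decide)))
      (by decide) (by decide) (by decide) (by decide) (by decide) (by decide)
      (by decide) (by decide) (by decide) hτ
  · exact Xi6_expand 6 τ (1) (1) (-1) 4 2 1 7 9 8 5 0 3
      ((sig_eq _ _).trans (if_pos (by decide)))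
      ((sig_eq _ _).trans (if_pos (by decide)))
      ((sig_eq _ _).trans (if_neg (by decide)))
      (by decide) (by decide) (by decide) (by decide) (by decide) (by decide)
      (by decide) (by decide) (by decide) hτ
  · exact Xi6_expand 7 τ (1) (-1) (1) 6 9 8 4 3 0 5 1 2
      ((sig_eq _ _).trans (if_pos (by decide)))
      ((sig_eq _ _).trans (if_neg (by decide)))
      ((sig_eq _ _).trans (if_pos (by decide)))
      (by decide) (by decide) (by decide) (by decide) (by decide) (by decide)
      (by decide) (by decide) (by decide) hτ
  · exact Xi6_expand 8 τ (1) (-1) (1) 6 7 9 1 0 5 3 2 4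
      ((sig_eq _ _).trans (if_pos (by decide)))
      ((sig_eq _ _).trans (if_neg (by decide)))
      ((sig_eq _ _).trans (if_pos (by decide)))
      (by decide) (by decide) (by decide) (by decide) (by decide) (by decide)
      (by decide) (by decide) (by decide) hτ
  · exact Xi6_expand 9 τ (1) (1) (-1) 6 7 8 2 3 5 0 1 4
      ((sig_eq _ _).trans (if_pos (by decide)))
      ((sig_eq _ _).trans (if_pos (by decide)))
      ((sig_eq _ _).trans (if_neg (by decide)))
      (by decide) (by decide) (by decide) (by decide) (by decide) (by decide)
      (by decide) (by decide) (by decide) hτ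

/-- A positive definite integral binary quadratic form. -/
def qf (x y : ℤ) : ℤ := 6 * x ^ 2 - 3 * x * y + 4 * y ^ 2

/-- A ray in the Siegel upper half space. -/
noncomputable def ray (t : ℝ) : Mat2 :=
  !![6 * t * Complex.I, -(3 / 2) * t * Complex.I; -(3 / 2) * t * Complex.I, 4 * t * Complex.I]

lemma ray_mem {t : ℝ} (ht : 0 < t) : ray t ∈ SiegelH2 := by
  constructor
  · ext i j
    fin_cases i <;> fin_cases j <;> simp [ray]
  · refine Matrix.PosDef.of_dotProduct_mulVec_pos ?_ ?_
    · ext i j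
      fin_cases i <;> fin_cases j <;> simp [ray]
    · intro x hx
      have e : (ray t).map Complex.im = !![6 * t, -(3 / 2) * t; -(3 / 2) * t, 4 * t] := by
        ext i j
        fin_cases i <;> fin_cases j <;> simp [ray]
      rw [e]
      simp [dotProduct, Matrix.mulVec, Fin.sum_univ_two]
      have hne : 0 < x 0 ^ 2 + x 1 ^ 2 := by
        by_contra hcon
        apply hx
        have h0 : x 0 = 0 := by nlinarith [sq_nonneg (x 0), sq_nonneg (x 1)]
        have h1 : x 1 = 0 := by nlinarith [sq_nonneg (x 0), sq_nonneg (x 1)]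
        funext i
        fin_cases i <;> simp [h0, h1]
      have key : 0 < 6 * x 0 ^ 2 - 3 * x 0 * x 1 + 4 * x 1 ^ 2 := by
        nlinarith [sq_nonneg (x 0 - x 1)]
      nlinarith [mul_pos ht key]

lemma thTerm_ray (a b : ℤ) (t : ℝ) (n : Fin 2 → ℤ) :
    thTerm (![a, b], ![0, 0]) ((2 : ℂ) • ray t) n =
      ((Real.exp (-(Real.pi * t / 2) * (qf (2 * n 0 + a) (2 * n 1 + b) : ℝ)) : ℝ) : ℂ) := by
  rw [thTerm, Complex.ofReal_exp]
  congr 1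
  simp [Fin.sum_univ_two, ray, qf]
  linear_combination (Real.pi * t * (-3 * a * n 0 * 0)) * Complex.I_sq +
    (Real.pi : ℂ) * t / 2 * (6 * (2 * n 0 + a) ^ 2 - 3 * (2 * n 0 + a) * (2 * n 1 + b)
      + 4 * (2 * n 1 + b) ^ 2) * Complex.I_sq

open Filter Topology in
lemma lim_theta (a b w : ℤ) (S : Finset (Fin 2 → ℤ))
    (h1 : ∀ n : Fin 2 → ℤ, w ≤ qf (2 * n 0 + a) (2 * n 1 + b))
    (h2 : ∀ n : Fin 2 → ℤ, qf (2 * n 0 + a) (2 * n 1 + b) = w ↔ n ∈ S) :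
    Tendsto (fun t : ℝ => Θf ![a, b] (ray t) * ((Real.exp (Real.pi * t / 2 * w) : ℝ) : ℂ))
      atTop (𝓝 (S.card : ℂ)) := by
  classical
  have hterm : ∀ t n, thTerm (![a, b], ![0, 0]) ((2 : ℂ) • ray t) n *
      ((Real.exp (Real.pi * t / 2 * w) : ℝ) : ℂ) =
      ((Real.exp (-(Real.pi / 2 * ((qf (2 * n 0 + a) (2 * n 1 + b) : ℝ) - w)) * t) : ℝ) : ℂ) := by
    intro t n
    rw [thTerm_ray, ← Complex.ofReal_mul, ← Real.exp_add]
    congr 2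
    ring
  have hE : ∀ t, Θf ![a, b] (ray t) * ((Real.exp (Real.pi * t / 2 * w) : ℝ) : ℂ) =
      ∑' n : Fin 2 → ℤ,
        ((Real.exp (-(Real.pi / 2 * ((qf (2 * n 0 + a) (2 * n 1 + b) : ℝ) - w)) * t) : ℝ) : ℂ) := by
    intro t
    rw [Θf, theta_eq, ← tsum_mul_right]
    exact tsum_congr (hterm t)
  have hL : (S.card : ℂ) = ∑' n : Fin 2 → ℤ, (if n ∈ S then (1 : ℂ) else 0) := by
    rw [tsum_eq_sum (s := S) (fun n hn => if_neg hn), Finset.sum_ite_mem]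
    simp
  rw [hL]
  simp only [hE]
  have hsum : Summable (fun n : Fin 2 → ℤ =>
      Real.exp (-(Real.pi / 2 * ((qf (2 * n 0 + a) (2 * n 1 + b) : ℝ) - w)) * 1)) := by
    have := ((summable_norm_thTerm (![a, b], ![0, 0]) (siegel_two (ray_mem one_pos))).mul_right
      ‖((Real.exp (Real.pi * 1 / 2 * w) : ℝ) : ℂ)‖)
    refine this.congr fun n => ?_
    rw [← norm_mul, hterm, Complex.norm_real, Real.norm_eq_abs, Real.abs_exp]
  have hnn : ∀ n : Fin 2 → ℤ, 0 ≤ (qf (2 * n 0 + a) (2 * n 1 + b) : ℝ) - w := fun n => by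
    have : (w : ℝ) ≤ (qf (2 * n 0 + a) (2 * n 1 + b) : ℝ) := by exact_mod_cast h1 n
    linarith
  refine tendsto_tsum_of_dominated_convergence hsum ?_ ?_
  · intro n
    by_cases hn : n ∈ S
    · have := (h2 n).2 hn
      simp [hn, this]
    · have hlt : 0 < Real.pi / 2 * ((qf (2 * n 0 + a) (2 * n 1 + b) : ℝ) - w) := by
        have h3 : (qf (2 * n 0 + a) (2 * n 1 + b) : ℝ) - w ≠ 0 := by
          intro h0
          apply hn
          rw [← h2]
          have : (qf (2 * n 0 + a) (2 * n 1 + b) : ℝ) = w := by linarith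
          exact_mod_cast this
        have := lt_of_le_of_ne (hnn n) (Ne.symm h3)
        have := Real.pi_pos
        positivity
      rw [if_neg hn, ← Complex.ofReal_zero]
      refine (Complex.continuous_ofReal.tendsto 0).comp ?_
      refine Real.tendsto_exp_atBot.comp ?_
      exact tendsto_id.const_mul_atTop_of_neg (by linarith)
  · filter_upwards [eventually_ge_atTop 1] with t ht n
    rw [Complex.norm_real, Real.norm_eq_abs, Real.abs_exp]
    apply Real.exp_le_exp.2
    have := mul_nonneg (div_nonneg Real.pi_pos.le (by norm_num : (0:ℝ) ≤ 2)) (hnn n)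
    nlinarith

/-- The local parameter along the ray. -/
noncomputable def qr (t : ℝ) : ℂ := ((Real.exp (-(Real.pi * t / 2)) : ℝ) : ℂ)

lemma qr_ne (t : ℝ) : qr t ≠ 0 := by
  rw [qr, Complex.ofReal_ne_zero]
  exact (Real.exp_pos _).ne'

open Filter Topology in
lemma qr_lim : Tendsto qr atTop (𝓝 0) := by
  rw [← Complex.ofReal_zero]
  refine (Complex.continuous_ofReal.tendsto 0).comp ?_
  refine Real.tendsto_exp_atBot.comp ?_
  have : (fun t : ℝ => -(Real.pi * t / 2)) = fun t => -(Real.pi / 2) * t := by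
    funext t; ring
  rw [this]
  exact tendsto_id.const_mul_atTop_of_neg (by linarith [Real.pi_pos])

open Filter Topology in
lemma exists_lim (a b : ℤ) (w : ℕ) (S : Finset (Fin 2 → ℤ))
    (h1 : ∀ n : Fin 2 → ℤ, (w : ℤ) ≤ qf (2 * n 0 + a) (2 * n 1 + b))
    (h2 : ∀ n : Fin 2 → ℤ, qf (2 * n 0 + a) (2 * n 1 + b) = w ↔ n ∈ S) :
    ∃ x : ℝ → ℂ, (∀ t, Θf ![a, b] (ray t) = qr t ^ w * x t) ∧
      Tendsto x atTop (𝓝 (S.card : ℂ)) := by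
  refine ⟨_, fun t => ?_, lim_theta a b w S h1 h2⟩
  have : qr t ^ w * ((Real.exp (Real.pi * t / 2 * (w : ℤ)) : ℝ) : ℂ) = 1 := by
    rw [qr, ← Complex.ofReal_pow, ← Complex.ofReal_mul, ← Real.exp_nat_mul, ← Real.exp_add]
    push_cast
    simp only [Complex.exp_eq_one_iff]
    exact ⟨0, by push_cast; ring⟩
  linear_combination (-Θf ![a, b] (ray t)) * this

lemma fun2 (n : Fin 2 → ℤ) (x y : ℤ) : n = ![x, y] ↔ n 0 = x ∧ n 1 = y := by
  constructor
  · rintro rfl; simp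
  · rintro ⟨h0, h1⟩
    funext i
    fin_cases i <;> simp [h0, h1]

lemma qf_bound (x y k : ℤ) (hk : 0 ≤ k) (h : qf x y ≤ 2 * k ^ 2) :
    -k ≤ x ∧ x ≤ k ∧ -k ≤ y ∧ y ≤ k := by
  unfold qf at h
  have hx : x ^ 2 ≤ k ^ 2 := by nlinarith [sq_nonneg (x - y), sq_nonneg x, sq_nonneg y]
  have hy : y ^ 2 ≤ k ^ 2 := by nlinarith [sq_nonneg (x - y), sq_nonneg x, sq_nonneg y]
  have hx' := abs_le_of_sq_le_sq' hx hk
  have hy' := abs_le_of_sq_le_sq' hy hk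
  exact ⟨hx'.1, hx'.2, hy'.1, hy'.2⟩

lemma qf_small (x y : ℤ) (h : qf x y ≤ 7) :
    (x = 0 ∧ y = 0) ∨ (x = 0 ∧ (y = 1 ∨ y = -1)) ∨ (y = 0 ∧ (x = 1 ∨ x = -1)) ∨
      (x = 1 ∧ y = 1) ∨ (x = -1 ∧ y = -1) := by
  obtain ⟨h1, h2, h3, h4⟩ := qf_bound x y 2 (by norm_num) (by linarith)
  interval_cases x <;> interval_cases y <;> simp [qf] at h ⊢

open Filter Topology in
lemma lim00 : ∃ x : ℝ → ℂ, (∀ t, Θf ![0, 0] (ray t) = qr t ^ 0 * x t) ∧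
    Tendsto x atTop (𝓝 (1 : ℂ)) := by
  have key := exists_lim 0 0 0 {![0, 0]} ?_ ?_
  · simpa using key
  · intro n
    by_contra hc
    push_cast at hc
    rcases qf_small _ _ (by linarith) with
      ⟨h, g⟩ | ⟨h, g | g⟩ | ⟨g, h | h⟩ | ⟨h, g⟩ | ⟨h, g⟩ <;>
    first
    | omega
    | (rw [h, g] at hc; norm_num [qf] at hc)
  · intro n
    simp only [Finset.mem_insert, Finset.mem_singleton, fun2]
    constructor
    · intro hc
      rcases qf_small _ _ (by rw [hc]; norm_num) with
        ⟨h, g⟩ | ⟨h, g | g⟩ | ⟨g, h | h⟩ | ⟨h, g⟩ | ⟨h, g⟩ <;> omega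
    · intro hc
      simp [hc, qf]

open Filter Topology in
lemma lim01 : ∃ x : ℝ → ℂ, (∀ t, Θf ![0, 1] (ray t) = qr t ^ 4 * x t) ∧
    Tendsto x atTop (𝓝 (2 : ℂ)) := by
  have key := exists_lim 0 1 4 {![0, 0], ![0, -1]} ?_ ?_
  · simpa using key
  · intro n
    by_contra hc
    push_cast at hc
    rcases qf_small _ _ (by linarith) with
      ⟨h, g⟩ | ⟨h, g | g⟩ | ⟨g, h | h⟩ | ⟨h, g⟩ | ⟨h, g⟩ <;>
    first
    | omega
    | (rw [h, g] at hc; norm_num [qf] at hc)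
  · intro n
    simp only [Finset.mem_insert, Finset.mem_singleton, fun2]
    constructor
    · intro hc
      rcases qf_small _ _ (by rw [hc]; norm_num) with
        ⟨h, g⟩ | ⟨h, g | g⟩ | ⟨g, h | h⟩ | ⟨h, g⟩ | ⟨h, g⟩ <;> omega
    · intro hc
      rcases hc with ⟨h0, h1⟩ | ⟨h0, h1⟩ <;> simp [h0, h1, qf]

open Filter Topology in
lemma lim10 : ∃ x : ℝ → ℂ, (∀ t, Θf ![1, 0] (ray t) = qr t ^ 6 * x t) ∧
    Tendsto x atTop (𝓝 (2 : ℂ)) := by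
  have key := exists_lim 1 0 6 {![0, 0], ![-1, 0]} ?_ ?_
  · simpa using key
  · intro n
    by_contra hc
    push_cast at hc
    rcases qf_small _ _ (by linarith) with
      ⟨h, g⟩ | ⟨h, g | g⟩ | ⟨g, h | h⟩ | ⟨h, g⟩ | ⟨h, g⟩ <;>
    first
    | omega
    | (rw [h, g] at hc; norm_num [qf] at hc)
  · intro n
    simp only [Finset.mem_insert, Finset.mem_singleton, fun2]
    constructor
    · intro hc
      rcases qf_small _ _ (by rw [hc]; norm_num) with
        ⟨h, g⟩ | ⟨h, g | g⟩ | ⟨g, h | h⟩ | ⟨h, g⟩ | ⟨h, g⟩ <;> omega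
    · intro hc
      rcases hc with ⟨h0, h1⟩ | ⟨h0, h1⟩ <;> simp [h0, h1, qf]

open Filter Topology in
lemma lim11 : ∃ x : ℝ → ℂ, (∀ t, Θf ![1, 1] (ray t) = qr t ^ 7 * x t) ∧
    Tendsto x atTop (𝓝 (2 : ℂ)) := by
  have key := exists_lim 1 1 7 {![0, 0], ![-1, -1]} ?_ ?_
  · simpa using key
  · intro n
    by_contra hc
    push_cast at hc
    rcases qf_small _ _ (by linarith) with
      ⟨h, g⟩ | ⟨h, g | g⟩ | ⟨g, h | h⟩ | ⟨h, g⟩ | ⟨h, g⟩ <;>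
    first
    | omega
    | (rw [h, g] at hc; norm_num [qf] at hc)
  · intro n
    simp only [Finset.mem_insert, Finset.mem_singleton, fun2]
    constructor
    · intro hc
      rcases qf_small _ _ (by rw [hc]; norm_num) with
        ⟨h, g⟩ | ⟨h, g | g⟩ | ⟨g, h | h⟩ | ⟨h, g⟩ | ⟨h, g⟩ <;> omega
    · intro hc
      rcases hc with ⟨h0, h1⟩ | ⟨h0, h1⟩ <;> simp [h0, h1, qf]

open Filter Topology in
lemma exists_Pv : ∃ p : Fin 5 → ℝ → ℂ,
    (∀ i t, Pv i (ray t) = qr t ^ (![0, 8, 12, 14, 17] : Fin 5 → ℕ) i * p i t) ∧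
    ∀ i, Tendsto (p i) atTop (𝓝 ((![1, 8, 8, 8, 32] : Fin 5 → ℂ) i)) := by
  obtain ⟨x0, e0, l0⟩ := lim00
  obtain ⟨x1, e1, l1⟩ := lim01
  obtain ⟨x2, e2, l2⟩ := lim10
  obtain ⟨x3, e3, l3⟩ := lim11
  have lq := qr_lim
  refine ⟨![fun t => x0 t ^ 4 + qr t ^ 16 * x1 t ^ 4 + qr t ^ 24 * x2 t ^ 4 + qr t ^ 28 * x3 t ^ 4,
    fun t => 2 * (x0 t ^ 2 * x1 t ^ 2 + qr t ^ 18 * (x2 t ^ 2 * x3 t ^ 2)),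
    fun t => 2 * (x0 t ^ 2 * x2 t ^ 2 + qr t ^ 10 * (x1 t ^ 2 * x3 t ^ 2)),
    fun t => 2 * (x0 t ^ 2 * x3 t ^ 2 + qr t ^ 6 * (x1 t ^ 2 * x2 t ^ 2)),
    fun t => 4 * (x0 t * x1 t * x2 t * x3 t)], ?_, ?_⟩
  · intro i t
    fin_cases i <;> simp [Pv, P0, P1, P2, P3, P4, e0, e1, e2, e3] <;> ring
  · intro i
    fin_cases i
    · have h := (((l0.pow 4).add ((lq.pow 16).mul (l1.pow 4))).add
        ((lq.pow 24).mul (l2.pow 4))).add ((lq.pow 28).mul (l3.pow 4))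
      norm_num at h
      exact h
    · have h := (((l0.pow 2).mul (l1.pow 2)).add
        ((lq.pow 18).mul ((l2.pow 2).mul (l3.pow 2)))).const_mul 2
      norm_num at h
      exact h
    · have h := (((l0.pow 2).mul (l2.pow 2)).add
        ((lq.pow 10).mul ((l1.pow 2).mul (l3.pow 2)))).const_mul 2
      norm_num at h
      exact h
    · have h := (((l0.pow 2).mul (l3.pow 2)).add
        ((lq.pow 6).mul ((l1.pow 2).mul (l2.pow 2)))).const_mul 2
      norm_num at h
      exact h
    · have h := (((l0.mul l1).mul l2).mul l3).const_mul 4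
      norm_num at h
      exact h

/-- Echelon basis of the 15-dimensional space of cubics. -/
def cubG (p : Fin 5 → ℂ) : Fin 15 → ℂ :=
  ![p 0 ^ 3 + (3) * p 0 * p 1 ^ 2 + (3) * p 0 * p 2 ^ 2 + (3) * p 0 * p 3 ^ 2 + (6) * p 0 * p 4 ^ 2,
    p 0 ^ 2 * p 1 + (3) * p 1 * p 2 ^ 2 + (3) * p 1 * p 3 ^ 2 + (-3) * p 1 * p 4 ^ 2,
    p 0 ^ 2 * p 2 + (3) * p 1 ^ 2 * p 2 + (3) * p 2 * p 3 ^ 2 + (-3) * p 2 * p 4 ^ 2,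
    p 0 ^ 2 * p 3 + (3) * p 1 ^ 2 * p 3 + (3) * p 2 ^ 2 * p 3 + (-3) * p 3 * p 4 ^ 2,
    p 0 ^ 2 * p 4 + (3) * p 4 ^ 3,
    p 0 * p 1 * p 2 + (-1) * p 1 ^ 2 * p 3 + (-1) * p 2 ^ 2 * p 3 + p 3 * p 4 ^ 2,
    p 0 * p 1 * p 3 + (-1) * p 1 ^ 2 * p 2 + (-1) * p 2 * p 3 ^ 2 + p 2 * p 4 ^ 2,
    p 1 ^ 3 + (3) * p 1 * p 4 ^ 2,
    p 0 * p 2 * p 3 + (-1) * p 1 * p 2 ^ 2 + (-1) * p 1 * p 3 ^ 2 + p 1 * p 4 ^ 2,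
    (3) * p 1 ^ 2 * p 4 + p 4 ^ 3,
    p 1 * p 2 * p 3 + (-1) * p 0 * p 4 ^ 2,
    p 2 ^ 3 + (3) * p 2 * p 4 ^ 2,
    (3) * p 2 ^ 2 * p 4 + p 4 ^ 3,
    p 3 ^ 3 + (3) * p 3 * p 4 ^ 2,
    (3) * p 3 ^ 2 * p 4 + p 4 ^ 3]

/-- The echelon basis with the leading power of `q` divided out. -/
def cubR (q : ℂ) (p : Fin 5 → ℂ) : Fin 15 → ℂ :=
  ![p 0 ^ 3 + (3) * q ^ 16 * p 0 * p 1 ^ 2 + (3) * q ^ 24 * p 0 * p 2 ^ 2 + (3) * q ^ 28 * p 0 * p 3 ^ 2 + (6) * q ^ 34 * p 0 * p 4 ^ 2,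
    p 0 ^ 2 * p 1 + (3) * q ^ 24 * p 1 * p 2 ^ 2 + (3) * q ^ 28 * p 1 * p 3 ^ 2 + (-3) * q ^ 34 * p 1 * p 4 ^ 2,
    p 0 ^ 2 * p 2 + (3) * q ^ 16 * p 1 ^ 2 * p 2 + (3) * q ^ 28 * p 2 * p 3 ^ 2 + (-3) * q ^ 34 * p 2 * p 4 ^ 2,
    p 0 ^ 2 * p 3 + (3) * q ^ 16 * p 1 ^ 2 * p 3 + (3) * q ^ 24 * p 2 ^ 2 * p 3 + (-3) * q ^ 34 * p 3 * p 4 ^ 2,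
    p 0 ^ 2 * p 4 + (3) * q ^ 34 * p 4 ^ 3,
    p 0 * p 1 * p 2 + (-1) * q ^ 10 * p 1 ^ 2 * p 3 + (-1) * q ^ 18 * p 2 ^ 2 * p 3 + q ^ 28 * p 3 * p 4 ^ 2,
    p 0 * p 1 * p 3 + (-1) * q ^ 6 * p 1 ^ 2 * p 2 + (-1) * q ^ 18 * p 2 * p 3 ^ 2 + q ^ 24 * p 2 * p 4 ^ 2,
    p 1 ^ 3 + (3) * q ^ 18 * p 1 * p 4 ^ 2,
    p 0 * p 2 * p 3 + (-1) * q ^ 6 * p 1 * p 2 ^ 2 + (-1) * q ^ 10 * p 1 * p 3 ^ 2 + q ^ 16 * p 1 * p 4 ^ 2,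
    (3) * p 1 ^ 2 * p 4 + q ^ 18 * p 4 ^ 3,
    p 1 * p 2 * p 3 + (-1) * p 0 * p 4 ^ 2,
    p 2 ^ 3 + (3) * q ^ 10 * p 2 * p 4 ^ 2,
    (3) * p 2 ^ 2 * p 4 + q ^ 10 * p 4 ^ 3,
    p 3 ^ 3 + (3) * q ^ 6 * p 3 * p 4 ^ 2,
    (3) * p 3 ^ 2 * p 4 + q ^ 6 * p 4 ^ 3]

/-- Orders of vanishing of the echelon basis along the ray. -/
def ordG : Fin 15 → ℕ := ![0, 8, 12, 14, 17, 20, 22, 24, 26, 33, 34, 36, 41, 42, 45]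

lemma cubG_eq (q : ℂ) (p : Fin 5 → ℂ) (k : Fin 15) :
    cubG (fun i => q ^ (![0, 8, 12, 14, 17] : Fin 5 → ℕ) i * p i) k =
      q ^ ordG k * cubR q p k := by
  fin_cases k <;> simp [cubG, cubR, ordG] <;> ring

lemma cubR_cont (k : Fin 15) : Continuous (fun z : ℂ × (Fin 5 → ℂ) => cubR z.1 z.2 k) := by
  fin_cases k <;> simp [cubR] <;> fun_prop

lemma cubR_ne (k : Fin 15) : cubR 0 ![1, 8, 8, 8, 32] k ≠ 0 := by
  have v2 : (![1, 8, 8, 8, 32] : Fin 5 → ℂ) 2 = 8 := rfl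
  have v3 : (![1, 8, 8, 8, 32] : Fin 5 → ℂ) 3 = 8 := rfl
  have v4 : (![1, 8, 8, 8, 32] : Fin 5 → ℂ) 4 = 32 := rfl
  fin_cases k <;> norm_num [cubR, v2, v3, v4]

/-- Coefficients of the echelon basis on the `θ¹²`. -/
noncomputable def coefT : Fin 15 → Fin 10 → ℂ :=
  ![![1/4, 1/4, 1/4, 1/4, 0, 0, 0, 0, 0, 0],
    ![1/12, -1/12, 1/12, -1/12, -1/48, -1/48, 0, 0, 0, 0],
    ![1/12, 1/12, -1/12, -1/12, 0, 0, -1/48, -1/48, 0, 0],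
    ![1/12, -1/12, -1/12, 1/12, 0, 0, 0, 0, -1/48, -1/48],
    ![0, 0, 0, 0, 1/48, -1/48, 1/48, -1/48, 1/48, -1/48],
    ![0, 0, 0, 0, 0, 0, 0, 0, 0, 0],
    ![0, 0, 0, 0, 0, 0, 0, 0, 0, 0],
    ![0, 0, 0, 0, 1/16, 1/16, 0, 0, 0, 0],
    ![0, 0, 0, 0, 0, 0, 0, 0, 0, 0],
    ![0, 0, 0, 0, 1/16, -1/16, 0, 0, 0, 0],
    ![0, 0, 0, 0, 0, 0, 0, 0, 0, 0],
    ![0, 0, 0, 0, 0, 0, 1/16, 1/16, 0, 0],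
    ![0, 0, 0, 0, 0, 0, 1/16, -1/16, 0, 0],
    ![0, 0, 0, 0, 0, 0, 0, 0, 1/16, 1/16],
    ![0, 0, 0, 0, 0, 0, 0, 0, 1/16, -1/16]]

/-- Coefficients of the echelon basis on the first five `Ξ₆`. -/
noncomputable def coefX : Fin 15 → Fin 5 → ℂ :=
  ![![1/8, 1/8, 1/8, 1/8, 0],
    ![1/8, -1/8, 1/8, -1/8, 0],
    ![1/8, 1/8, -1/8, -1/8, 0],
    ![1/8, -1/8, -1/8, 1/8, 0],
    ![-1/8, 1/8, -1/8, 1/8, 1/4],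
    ![-1/16, 1/16, 1/16, -1/16, 0],
    ![-1/16, -1/16, 1/16, 1/16, 0],
    ![0, 0, 0, 0, 0],
    ![-1/16, 1/16, -1/16, 1/16, 0],
    ![0, 0, 0, 0, 0],
    ![-1/48, -1/48, -1/48, -1/48, 0],
    ![0, 0, 0, 0, 0],
    ![0, 0, 0, 0, 0],
    ![0, 0, 0, 0, 0],
    ![0, 0, 0, 0, 0]]

lemma cubG_comb (p : Fin 5 → ℂ) (k : Fin 15) :
    cubG p k = ∑ j, coefT k j * linT p j ^ 3 +
      ∑ j : Fin 5, coefX k j * cubXi (linT p) (Fin.castLE (by norm_num) j) := by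
  simp only [Fin.sum_univ_succ, Fin.sum_univ_zero]
  fin_cases k <;> simp [cubG, coefT, coefX, linT, cubXi] <;> ring

/-- Coefficients of the last five `Ξ₆` on the first five. -/
def coefY : Fin 5 → Fin 5 → ℂ :=
  ![![1, -1, 1, -1, -1],
    ![0, 1, -1, 0, 1],
    ![1, 0, 0, -1, -1],
    ![0, 0, -1, 1, 1],
    ![1, -1, 0, 0, -1]]

lemma cubXi_comb (p : Fin 5 → ℂ) (k : Fin 5) :
    cubXi (linT p) (Fin.natAdd 5 k) =
      ∑ j : Fin 5, coefY k j * cubXi (linT p) (Fin.castLE (by norm_num) j) := by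
  simp only [Fin.sum_univ_succ, Fin.sum_univ_zero]
  fin_cases k <;> simp [coefY, linT, cubXi] <;> ring

open Filter Topology in
/-- Functions with distinct orders of vanishing are linearly independent. -/
lemma coef_zero {N : ℕ} (w : Fin N → ℕ) (hw : StrictMono w) (R : Fin N → ℝ → ℂ) (L : Fin N → ℂ)
    (hL : ∀ k, L k ≠ 0) (hR : ∀ k, Tendsto (R k) atTop (𝓝 (L k))) (c : Fin N → ℂ)
    (h : ∀ t : ℝ, 0 < t → ∑ k, c k * (qr t ^ w k * R k t) = 0) : ∀ k, c k = 0 := by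
  intro k
  refine WellFoundedLT.induction (motive := fun k => c k = 0) k fun k ih => ?_
  have h1 : ∀ t : ℝ, 0 < t →
      ∑ j, (if j < k then 0 else c j * (qr t ^ (w j - w k) * R j t)) = 0 := by
    intro t ht
    have hq := pow_ne_zero (w k) (qr_ne t)
    apply mul_left_cancel₀ hq
    refine Eq.trans ?_ ((h t ht).trans (mul_zero _).symm)
    rw [Finset.mul_sum]
    refine Finset.sum_congr rfl fun j _ => ?_
    split_ifs with hj
    · rw [ih j hj]; ring
    · have : w j = w k + (w j - w k) := by
        have := hw.monotone (not_lt.1 hj)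
        omega
      conv_rhs => rw [this, pow_add]
      ring
  have h2 : Tendsto (fun t => ∑ j, (if j < k then 0 else c j * (qr t ^ (w j - w k) * R j t)))
      atTop (𝓝 (∑ j, (if j < k then 0 else c j * (0 ^ (w j - w k) * L j)))) := by
    refine tendsto_finsetSum _ fun j _ => ?_
    split_ifs with hj
    · exact tendsto_const_nhds
    · exact ((qr_lim.pow _).mul (hR j)).const_mul _
  have h3 : Tendsto (fun t => ∑ j, (if j < k then 0 else c j * (qr t ^ (w j - w k) * R j t)))
      atTop (𝓝 0) := by
    refine tendsto_const_nhds.congr' ?_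
    filter_upwards [eventually_gt_atTop 0] with t ht
    exact (h1 t ht).symm
  have h4 := tendsto_nhds_unique h2 h3
  rw [Finset.sum_eq_single k] at h4
  · simpa [hL k] using h4
  · intro j _ hjk
    split_ifs with hj
    · rfl
    · have : w k < w j := hw (lt_of_le_of_ne (not_lt.1 hj) (Ne.symm hjk))
      rw [zero_pow (by omega)]
      ring
  · simp

lemma ordG_mono : StrictMono ordG := by
  rw [Fin.strictMono_iff_lt_succ]
  decide

/-- The echelon functions on the Siegel upper half space. -/
noncomputable def Gf (k : Fin 15) : SiegelH2 → ℂ := fun τ => cubG (fun i => Pv i τ.1) k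

/-- The `θ¹²`. -/
noncomputable def Tf (d : Fin 10) : SiegelH2 → ℂ := fun τ => theta (δev d) τ.1 ^ 12

/-- The `Ξ₆`. -/
noncomputable def Xf (d : Fin 10) : SiegelH2 → ℂ := fun τ => Xi6 d τ.1

open Filter Topology in
lemma cubR_lim (p : Fin 5 → ℝ → ℂ) (v : Fin 5 → ℂ)
    (hl : ∀ i, Tendsto (p i) atTop (𝓝 (v i))) (k : Fin 15) :
    Tendsto (fun t => cubR (qr t) (fun i => p i t) k) atTop (𝓝 (cubR 0 v k)) := by
  have h1 : Tendsto (fun t => (qr t, fun i => p i t)) atTop (𝓝 ((0 : ℂ), v)) :=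
    qr_lim.prodMk_nhds (tendsto_pi_nhds.2 hl)
  have h2 := (cubR_cont k).tendsto ((0 : ℂ), v)
  have h3 := h2.comp h1
  rw [Function.comp_def] at h3
  exact h3

lemma Gf_li : LinearIndependent ℂ Gf := by
  rw [Fintype.linearIndependent_iff]
  intro c hc
  obtain ⟨p, hp, hl⟩ := exists_Pv
  refine coef_zero ordG ordG_mono (fun k t => cubR (qr t) (fun i => p i t) k)
    (fun k => cubR 0 ![1, 8, 8, 8, 32] k) cubR_ne (fun k => ?_) c (fun t ht => ?_)
  · exact cubR_lim p _ hl k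
  · have h := congrFun hc ⟨ray t, ray_mem ht⟩
    simp only [Finset.sum_apply, Pi.smul_apply, smul_eq_mul, Pi.zero_apply, Gf, hp] at h
    rw [← h]
    refine Finset.sum_congr rfl fun k _ => ?_
    rw [cubG_eq]

/-- The fifteen generators. -/
noncomputable def gens : Fin 10 ⊕ Fin 5 → SiegelH2 → ℂ :=
  Sum.elim Tf (fun j => Xf (Fin.castLE (by norm_num) j))

lemma Gf_mem (k : Fin 15) : Gf k ∈ Submodule.span ℂ (Set.range gens) := by
  have e : Gf k = ∑ j, coefT k j • gens (Sum.inl j) + ∑ j, coefX k j • gens (Sum.inr j) := by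
    funext τ
    simp only [Gf, gens, Sum.elim_inl, Sum.elim_inr, Pi.add_apply, Finset.sum_apply,
      Pi.smul_apply, smul_eq_mul, Tf, Xf, theta_twelve _ τ.2, Xi6_eq _ τ.2]
    exact cubG_comb _ k
  rw [e]
  refine Submodule.add_mem _ ?_ ?_ <;>
  exact Submodule.sum_mem _ fun j _ =>
    Submodule.smul_mem _ _ (Submodule.subset_span (Set.mem_range_self _))

lemma gens_li : LinearIndependent ℂ gens := by
  rw [linearIndependent_iff_card_le_finrank_span, Set.finrank]
  have h1 := finrank_span_eq_card Gf_li
  have h2 : Submodule.span ℂ (Set.range Gf) ≤ Submodule.span ℂ (Set.range gens) := by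
    rw [Submodule.span_le]
    rintro _ ⟨k, rfl⟩
    exact Gf_mem k
  have : FiniteDimensional ℂ (Submodule.span ℂ (Set.range gens)) :=
    FiniteDimensional.span_of_finite ℂ (Set.finite_range gens)
  have h3 := Submodule.finrank_mono h2
  simp at h1 ⊢
  omega

lemma Xf_mem (d : Fin 10) : Xf d ∈ Submodule.span ℂ (Set.range gens) := by
  have hlow : ∀ j : Fin 5, Xf (Fin.castLE (by norm_num) j) ∈
      Submodule.span ℂ (Set.range gens) := fun j =>
    Submodule.subset_span ⟨Sum.inr j, rfl⟩
  have hhigh : ∀ k : Fin 5, Xf (Fin.natAdd 5 k) ∈ Submodule.span ℂ (Set.range gens) := by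
    intro k
    have e : Xf (Fin.natAdd 5 k) =
        ∑ j : Fin 5, coefY k j • Xf (Fin.castLE (by norm_num) j) := by
      funext τ
      simp only [Finset.sum_apply, Pi.smul_apply, smul_eq_mul, Xf, Xi6_eq _ τ.2]
      exact cubXi_comb _ k
    rw [e]
    exact Submodule.sum_mem _ fun j _ => Submodule.smul_mem _ _ (hlow j)
  refine Fin.addCases (m := 5) (n := 5)
    (motive := fun d => Xf d ∈ Submodule.span ℂ (Set.range gens)) (fun j => ?_) hhigh d
  exact hlow j

lemma span_eq : Submodule.span ℂ (Set.range Tf ∪ Set.range Xf) =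
    Submodule.span ℂ (Set.range gens) := by
  apply le_antisymm <;> rw [Submodule.span_le]
  · rintro _ (⟨d, rfl⟩ | ⟨d, rfl⟩)
    · exact Submodule.subset_span ⟨Sum.inl d, rfl⟩
    · exact Xf_mem d
  · rintro _ ⟨d | d, rfl⟩
    · exact Submodule.subset_span (Or.inl ⟨d, rfl⟩)
    · exact Submodule.subset_span (Or.inr ⟨_, rfl⟩)

/-- the span of the `θ¹²[δ]` has dimension exactly 10, and the span of the
`θ¹²[δ]` together with the `Ξ₆[δ]` has dimension exactly 15. -/
theorem statement17 :
    Module.finrank ℂ ↥(Submodule.span ℂ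
      (Set.range fun d : Fin 10 => fun τ : SiegelH2 => theta (δev d) τ.1 ^ 12)) = 10 ∧
    Module.finrank ℂ ↥(Submodule.span ℂ
      ((Set.range fun d : Fin 10 => fun τ : SiegelH2 => theta (δev d) τ.1 ^ 12)
        ∪ (Set.range fun d : Fin 10 => fun τ : SiegelH2 => Xi6 d τ.1))) = 15 := by
  change Module.finrank ℂ ↥(Submodule.span ℂ (Set.range Tf)) = 10 ∧
    Module.finrank ℂ ↥(Submodule.span ℂ (Set.range Tf ∪ Set.range Xf)) = 15
  constructor
  · have h : LinearIndependent ℂ Tf := gens_li.comp Sum.inl Sum.inl_injective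
    rw [finrank_span_eq_card h]
    simp
  · rw [span_eq, finrank_span_eq_card gens_li]
    simp

end TwoLoop
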